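/- Let m₀ ∈ L^∞(𝕋) be non-singular with R_{m₀}1 = 1 and let m be the associated measure on S_N, with the wavelet representation realized on L²(m) by Uξ = m₀·(ξ∘S) and π(f)ξ = fξ. Then there is a one-to-one, linear, and monotone (order-preserving on self-adjoint/positive elements) correspondence between: (i) operators in the commutant of {U, T}; (ii) cocycles, i.e., functions f ∈ L^∞(m) with f∘S = f m-a.e.; and (iii) functions h ∈ L^∞(𝕋) harmonic for the Ruelle operator, i.e., R_{m₀}h = h. From (i) to (ii) the correspondence sends the operator M_f to f; from (ii) to (iii) it is f ↦ E(f). -/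

import Mathlib

noncomputable section

open MeasureTheory Real Complex Filter Finset
open scoped ENNReal

/-! ### Basic instances for the circle -/

instance : MeasurableSpace Circle := borel Circle
instance : BorelSpace Circle := ⟨rfl⟩

/-- The point `e^{-2πit}` of the unit circle. -/
def ee (t : ℝ) : Circle := Circle.exp (-(2 * π * t))

/-- Normalized Lebesgue measure on the circle, realized as the image of Lebesgue
measure on `[0,1)` under `t ↦ e^{-2πit}`. -/
def circleMeasure : Measure Circle := (volume.restrict (Set.Ico (0:ℝ) 1)).map ee

/-! ### The Baumslag–Solitar group `BS(1,N)` -/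

/-- The single relation `u t u⁻¹ (t^N)⁻¹` defining `BS(1,N)`. -/
def BSRel (N : ℕ) : Set (FreeGroup Bool) :=
  {FreeGroup.of true * FreeGroup.of false * (FreeGroup.of true)⁻¹ * ((FreeGroup.of false) ^ N)⁻¹}

/-- The Baumslag–Solitar group `BS(1,N) = ⟨u,t | u t u⁻¹ = t^N⟩`. -/
abbrev BS (N : ℕ) := PresentedGroup (BSRel N)

/-- The generator `u` of `BS(1,N)`. -/
def BS.u (N : ℕ) : BS N := PresentedGroup.of true

/-- The generator `t` of `BS(1,N)`. -/
def BS.t (N : ℕ) : BS N := PresentedGroup.of false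

/-! ### The solenoid -/

/-- The `N`-solenoid, as a subgroup of the product of circles indexed by `ℤ`:
all sequences `(z_n)` with `z_{n+1}^N = z_n`. -/
def solenoidGroup (N : ℕ) : Subgroup (ℤ → Circle) where
  carrier := {z | ∀ n : ℤ, z (n + 1) ^ N = z n}
  one_mem' := by intro n; simp
  mul_mem' := by
    intro a b ha hb n
    simp only [Set.mem_setOf_eq, Pi.mul_apply, mul_pow] at *
    rw [ha n, hb n]
  inv_mem' := by
    intro a ha n
    simp only [Set.mem_setOf_eq, Pi.inv_apply, inv_pow] at *
    rw [ha n]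

/-- The `N`-solenoid as a type. -/
abbrev Solenoid (N : ℕ) := ↥(solenoidGroup N)

/-- The shift `S` on the solenoid: `(S z)_n = z_{n-1}`. -/
def shift (N : ℕ) (z : Solenoid N) : Solenoid N :=
  ⟨fun n => z.val (n - 1), by
    intro n
    have h := z.property (n - 1)
    simpa using h⟩

/-- The inverse `S⁻¹` of the shift on the solenoid: `(S⁻¹ z)_n = z_{n+1}`. -/
def shiftInv (N : ℕ) (z : Solenoid N) : Solenoid N :=
  ⟨fun n => z.val (n + 1), fun n => z.property (n + 1)⟩

/-- Integer powers `Sⁿ` of the shift. -/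
def shiftZ (N : ℕ) (n : ℤ) : Solenoid N → Solenoid N :=
  if 0 ≤ n then (shift N)^[n.toNat] else (shiftInv N)^[(-n).toNat]

/-- The measure `ν ∘ S`, defined by `(ν ∘ S)(E) = ν(S(E))`. -/
def measShift (N : ℕ) (ν : Measure (Solenoid N)) : Measure (Solenoid N) :=
  ν.map (shiftInv N)

/-- `ν` is quasi-invariant for the shift `S`: `ν ∘ S` and `ν` are mutually
absolutely continuous. -/
def QuasiInvariant (N : ℕ) (ν : Measure (Solenoid N)) : Prop :=
  measShift N ν ≪ ν ∧ ν ≪ measShift N ν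

/-- The shift `S` is ergodic with respect to `ν`. -/
def ShiftErgodic (N : ℕ) (ν : Measure (Solenoid N)) : Prop :=
  ∀ E : Set (Solenoid N), MeasurableSet E → shift N ⁻¹' E = E → ν E = 0 ∨ ν Eᶜ = 0

/-- A bounded measurable (`L^∞`-type) function. -/
def BddMeasurable {α : Type*} [MeasurableSpace α] (f : α → ℂ) : Prop :=
  Measurable f ∧ ∃ C : ℝ, ∀ x, ‖f x‖ ≤ C

/-! ### The representation `π_{ν,θ}` -/

/-- The pair of unitaries `U, T` on `L²(ν)` given by
`Uξ = √Δ ⬝ θ ⬝ (ξ∘S)` (with `Δ = d(ν∘S)/dν`) and `(Tξ)(z) = z₀ ξ(z)`. -/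
def IsPiNuTheta (N : ℕ) (ν : Measure (Solenoid N)) (θ : Solenoid N → Circle)
    (U T : unitary (Lp ℂ 2 ν →L[ℂ] Lp ℂ 2 ν)) : Prop :=
  (∀ ξ : Lp ℂ 2 ν,
      (((U : Lp ℂ 2 ν →L[ℂ] Lp ℂ 2 ν) ξ : Lp ℂ 2 ν) : Solenoid N → ℂ) =ᵐ[ν]
        fun z => (Real.sqrt (((measShift N ν).rnDeriv ν z).toReal) : ℂ) * (θ z : ℂ) *
          (ξ : Solenoid N → ℂ) (shift N z)) ∧
  (∀ ξ : Lp ℂ 2 ν,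
      (((T : Lp ℂ 2 ν →L[ℂ] Lp ℂ 2 ν) ξ : Lp ℂ 2 ν) : Solenoid N → ℂ) =ᵐ[ν]
        fun z => ((z.val 0 : Circle) : ℂ) * (ξ : Solenoid N → ℂ) z)

/-- `φ` is a cyclic vector for the (unitary) representation generated by `U` and `T`:
the only closed subspace containing `φ` and invariant under the group generated by
`U` and `T` is the whole space. -/
def cyclicVector {H : Type*} [NormedAddCommGroup H] [InnerProductSpace ℂ H]
    [CompleteSpace H] (U T : unitary (H →L[ℂ] H)) (φ : H) : Prop :=
  ∀ K : Submodule ℂ H, IsClosed (K : Set H) → φ ∈ K →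
    (∀ g ∈ Subgroup.closure ({U, T} : Set (unitary (H →L[ℂ] H))),
      ∀ v ∈ K, (g : H →L[ℂ] H) v ∈ K) → K = ⊤

/-! ### Filters and the Ruelle operator -/

/-- The quadrature mirror filter condition `R_{m₀} 1 = 1`, written out on `[0,1)`:
`(1/N) ∑_{k<N} |m₀(e^{-2πi(x+k)/N})|² = 1` for a.e. `x`. -/
def QMF (N : ℕ) (m₀ : Circle → ℂ) : Prop :=
  ∀ᵐ x ∂(volume.restrict (Set.Ico (0:ℝ) 1)),
    (1 / N : ℝ) * ∑ k ∈ Finset.range N, ‖m₀ (ee ((x + k) / N))‖ ^ 2 = 1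

/-- `h` is a fixed point of the Ruelle operator `R_{m₀}`:
`(1/N) ∑_{w^N = z} |m₀(w)|² h(w) = h(z)` for a.e. `z`, written out on `[0,1)`. -/
def RuelleFixed (N : ℕ) (m₀ : Circle → ℂ) (h : Circle → ℂ) : Prop :=
  ∀ᵐ x ∂(volume.restrict (Set.Ico (0:ℝ) 1)),
    (1 / N : ℂ) * ∑ k ∈ Finset.range N,
        (‖m₀ (ee ((x + k) / N))‖ ^ 2 : ℝ) * h (ee ((x + k) / N)) = h (ee x)

/-- The wavelet representation of `BS(1,N)` associated to a filter `m₀`, realized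
on `L²(m)` for a measure `m` on the solenoid: `Uξ = m₀ ⬝ (ξ∘S)` and `T` is
multiplication by the coordinate `z₀`. -/
def IsWaveletRepOn (N : ℕ) (m₀ : Circle → ℂ) (m : Measure (Solenoid N))
    (U T : unitary (Lp ℂ 2 m →L[ℂ] Lp ℂ 2 m)) : Prop :=
  (∀ ξ : Lp ℂ 2 m,
      (((U : Lp ℂ 2 m →L[ℂ] Lp ℂ 2 m) ξ : Lp ℂ 2 m) : Solenoid N → ℂ) =ᵐ[m]
        fun z => m₀ (z.val 0) * (ξ : Solenoid N → ℂ) (shift N z)) ∧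
  (∀ ξ : Lp ℂ 2 m,
      (((T : Lp ℂ 2 m →L[ℂ] Lp ℂ 2 m) ξ : Lp ℂ 2 m) : Solenoid N → ℂ) =ᵐ[m]
        fun z => ((z.val 0 : Circle) : ℂ) * (ξ : Solenoid N → ℂ) z)

/-- The measure `m` on the solenoid associated to a weight `W` (with `N W = |m₀|²`):
its `z₀`-marginal is normalized Lebesgue measure on the circle, and
`d(m∘S)/dm = N W`. -/
def IsAssociatedMeasure (N : ℕ) (W : Circle → ℝ) (m : Measure (Solenoid N)) : Prop :=
  IsProbabilityMeasure m ∧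
  m.map (fun z : Solenoid N => z.val 0) = circleMeasure ∧
  measShift N m = m.withDensity (fun z => ENNReal.ofReal (N * W (z.val 0)))

end

/-!
Since `z_n` is a power of `z_{n+1}`, the coordinates of the solenoid generate an increasing
filtration, and they separate the points of the solenoid.

The shift moves each coordinate to the next one and changes `m` by the density `|m₀(z₀)|²`, which
is a function of every coordinate `z_n` with `n ≥ 0`. Hence an identity `E[f | z_n] = h(z_n)` is
carried by the shift to `E[f ∘ S⁻¹ | z_{n+1}] = h(z_{n+1})`, while `R_{m₀} h = h` says exactly that
`E[h(z₁) | z₀] = h(z₀)`. So `h` is harmonic if and only if `h(z_n)` is a martingale. The limit of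
this martingale is a cocycle `f` with `E f = h`; conversely a cocycle `f` satisfies
`E[f | z_n] = (E f)(z_n)` for all `n`, so `E f` is harmonic and, by Lévy's theorem, `f` is the limit
of `(E f)(z_n)`. This gives injectivity and monotonicity.

Multiplication by `z_{n+1}` is the conjugate by `U` of multiplication by `z_n`, so an operator
commuting with `U` and `T` commutes with multiplication by every coordinate, and by
Stone–Weierstrass with multiplication by every continuous function. It is then itself the
multiplication by the image of the constant function `1`, and commuting with `U` makes this
multiplier a cocycle because `m₀ ≠ 0` almost everywhere.
-/

section

open MeasureTheory Filter Topology
open scoped ENNReal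

namespace BddMeasurable

variable {α β : Type*} [MeasurableSpace α] [MeasurableSpace β] {μ : Measure α} {f g : α → ℂ}

theorem comp (hf : BddMeasurable f) {u : β → α} (hu : Measurable u) :
    BddMeasurable fun x ↦ f (u x) :=
  ⟨hf.1.comp hu, hf.2.imp fun _ hC x ↦ hC (u x)⟩

theorem mul (hf : BddMeasurable f) (hg : BddMeasurable g) : BddMeasurable fun x ↦ f x * g x := by
  obtain ⟨hf, C, hC⟩ := hf
  obtain ⟨hg, D, hD⟩ := hg
  refine ⟨hf.mul hg, C * D, fun x ↦ ?_⟩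
  rw [norm_mul]
  exact mul_le_mul (hC x) (hD x) (norm_nonneg _) ((norm_nonneg _).trans (hC x))

theorem indicator (hf : BddMeasurable f) {s : Set α} (hs : MeasurableSet s) :
    BddMeasurable (s.indicator f) :=
  ⟨hf.1.indicator hs, hf.2.imp fun _ hC x ↦ (norm_indicator_le_norm_self f x).trans (hC x)⟩

theorem normSq (hf : BddMeasurable f) : BddMeasurable fun x ↦ ((‖f x‖ ^ 2 : ℝ) : ℂ) := by
  obtain ⟨hf, C, hC⟩ := hf
  refine ⟨by fun_prop, C ^ 2, fun x ↦ ?_⟩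
  rw [Complex.norm_real, Real.norm_of_nonneg (by positivity)]
  exact pow_le_pow_left₀ (norm_nonneg _) (hC x) 2

theorem integrable_mul (hf : BddMeasurable f) (hg : Integrable g μ) :
    Integrable (fun x ↦ f x * g x) μ :=
  let ⟨_, hC⟩ := hf.2
  hg.bdd_mul hf.1.aestronglyMeasurable (ae_of_all _ hC)

theorem integrable [IsFiniteMeasure μ] (hf : BddMeasurable f) : Integrable f μ := by
  simpa using hf.integrable_mul (integrable_const (1 : ℂ))

end BddMeasurable

theorem bddMeasurable_const {α : Type*} [MeasurableSpace α] (c : ℂ) :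
    BddMeasurable fun _ : α ↦ c :=
  ⟨measurable_const, ‖c‖, fun _ ↦ le_rfl⟩

theorem exists_bddMeasurable_ae_eq {α : Type*} [MeasurableSpace α] {μ : Measure α} {f : α → ℂ}
    (hf : AEMeasurable f μ) {C : ℝ} (hC : ∀ᵐ x ∂μ, ‖f x‖ ≤ C) :
    ∃ g, BddMeasurable g ∧ g =ᵐ[μ] f := by
  let s : Set α := {x | ‖hf.mk f x‖ ≤ C}
  have hs : MeasurableSet s := measurableSet_le hf.measurable_mk.norm measurable_const
  refine ⟨s.indicator (hf.mk f), ⟨hf.measurable_mk.indicator hs, max C 0, fun x ↦ ?_⟩, ?_⟩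
  · by_cases hx : x ∈ s
    · simpa only [Set.indicator_of_mem hx] using le_max_of_le_left hx
    · simp [Set.indicator_of_notMem hx]
  · filter_upwards [hf.ae_eq_mk, hC] with x hmk hx
    have : x ∈ s := by simpa only [s, Set.mem_ofPred_eq, ← hmk] using hx
    rw [Set.indicator_of_mem this, hmk]

section CondExpGivenMap

variable {Ω S : Type*} [MeasurableSpace Ω] [mS : MeasurableSpace S] {μ : Measure Ω} {X : Ω → S}

theorem ae_eq_map_iff_comp_ae_eq (hX : Measurable X) {h k : S → ℂ}
    (hh : AEMeasurable h (μ.map X)) (hk : AEMeasurable k (μ.map X)) :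
    h =ᵐ[μ.map X] k ↔ (fun ω ↦ h (X ω)) =ᵐ[μ] fun ω ↦ k (X ω) := by
  refine ⟨ae_of_ae_map hX.aemeasurable, fun hhk ↦ ?_⟩
  have hmk : hh.mk h =ᵐ[μ.map X] hk.mk k := by
    refine (ae_map_iff hX.aemeasurable
      (measurableSet_eq_fun hh.measurable_mk hk.measurable_mk)).2 ?_
    filter_upwards [hhk, ae_of_ae_map hX.aemeasurable hh.ae_eq_mk,
      ae_of_ae_map hX.aemeasurable hk.ae_eq_mk] with ω h₁ h₂ h₃
    rw [← h₂, ← h₃, h₁]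
  exact hh.ae_eq_mk.trans (hmk.trans hk.ae_eq_mk.symm)

theorem condExp_comap_ae_eq_comp_iff [IsFiniteMeasure μ] (hX : Measurable X) {f : Ω → ℂ}
    (hf : Integrable f μ) {h : S → ℂ} (hh : Integrable h (μ.map X)) :
    μ[f | mS.comap X] =ᵐ[μ] (fun ω ↦ h (X ω)) ↔
      ∀ g : S → ℂ, BddMeasurable g → ∫ ω, g (X ω) * f ω ∂μ = ∫ ω, g (X ω) * h (X ω) ∂μ := by
  constructor
  · intro hfh g hg
    obtain ⟨C, hC⟩ := hg.2
    have pull_out := condExp_stronglyMeasurable_bilin_of_bound (.mul ℝ ℂ) hX.comap_le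
      (hg.1.comp (comap_measurable X)).stronglyMeasurable hf C (ae_of_all _ fun ω ↦ hC (X ω))
    rw [← integral_condExp hX.comap_le]
    refine integral_congr_ae (pull_out.trans ?_)
    filter_upwards [hfh] with ω hω using congrArg (g (X ω) * ·) hω
  · intro hfh
    have hhX : Integrable (fun ω ↦ h (X ω)) μ := hh.comp_measurable hX
    refine (ae_eq_condExp_of_forall_setIntegral_eq hX.comap_le hf (fun _ _ _ ↦ hhX.integrableOn)
      ?_ (hh.aestronglyMeasurable.comp_ae_measurable' hX.aemeasurable)).symm
    rintro _ ⟨t, ht, rfl⟩ -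
    have mul_eq (F : Ω → ℂ) : (fun ω ↦ t.indicator (fun _ ↦ (1 : ℂ)) (X ω) * F ω) =
        (X ⁻¹' t).indicator F := by
      ext ω
      by_cases hω : X ω ∈ t <;> simp [hω]
    have key := hfh _ ((bddMeasurable_const (1 : ℂ)).indicator ht)
    rwa [mul_eq, mul_eq, integral_indicator (hX ht), integral_indicator (hX ht), eq_comm] at key

end CondExpGivenMap

section MartingaleConvergence

variable {Ω : Type*} [m0 : MeasurableSpace Ω] {μ : Measure Ω} {ℱ : Filtration ℕ m0}

theorem tendsto_of_tendsto_re_im {ι : Type*} {l : Filter ι} {u : ι → ℂ} {a b : ℝ}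
    (hre : Tendsto (fun i ↦ Complex.reCLM (u i)) l (𝓝 a))
    (him : Tendsto (fun i ↦ Complex.imCLM (u i)) l (𝓝 b)) :
    Tendsto u l (𝓝 ⟨a, b⟩) :=
  (Complex.equivRealProdCLM.symm.continuous.tendsto (a, b)).comp (hre.prodMk_nhds him)

theorem tendsto_ae_condExp_complex [IsFiniteMeasure μ] {f : Ω → ℂ} (hf : Integrable f μ)
    (hmeas : StronglyMeasurable[⨆ n, ℱ n] f) :
    ∀ᵐ ω ∂μ, Tendsto (fun n ↦ (μ[f | ℱ n]) ω) atTop (𝓝 (f ω)) := by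
  have clm_tendsto (L : ℂ →L[ℝ] ℝ) :
      ∀ᵐ ω ∂μ, Tendsto (fun n ↦ L ((μ[f | ℱ n]) ω)) atTop (𝓝 (L (f ω))) := by
    filter_upwards [(L.integrable_comp hf).tendsto_ae_condExp (ℱ := ℱ)
      (L.continuous.comp_stronglyMeasurable hmeas),
      ae_all_iff.2 fun n ↦ L.comp_condExp_comm hf (m := ℱ n)] with ω hω hcomm
    exact hω.congr fun n ↦ (hcomm n).symm
  filter_upwards [clm_tendsto Complex.reCLM, clm_tendsto Complex.imCLM] with ω hre him
  exact tendsto_of_tendsto_re_im hre him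

theorem martingale_clm_comp {E F : Type*} [NormedAddCommGroup E] [NormedSpace ℝ E] [CompleteSpace E]
    [NormedAddCommGroup F] [NormedSpace ℝ F] [CompleteSpace F] {M : ℕ → Ω → E}
    (hM : Martingale M ℱ μ) (L : E →L[ℝ] F) : Martingale (fun n ω ↦ L (M n ω)) ℱ μ := by
  refine ⟨fun n ↦ L.continuous.comp_stronglyMeasurable (hM.1 n), fun i j hij ↦ ?_⟩
  filter_upwards [L.comp_condExp_comm (hM.integrable j) (m := ℱ i), hM.2 i j hij] with ω hL hω
  exact hL.symm.trans (congrArg L hω)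

theorem ae_exists_tendsto_of_norm_le [IsFiniteMeasure μ] {M : ℕ → Ω → ℂ} (hM : Martingale M ℱ μ)
    {C : ℝ} (hC : ∀ n ω, ‖M n ω‖ ≤ C) : ∀ᵐ ω ∂μ, ∃ l, Tendsto (M · ω) atTop (𝓝 l) := by
  have clm_tendsto (L : ℂ →L[ℝ] ℝ) : ∀ᵐ ω ∂μ, ∃ l, Tendsto (fun n ↦ L (M n ω)) atTop (𝓝 l) := by
    refine (martingale_clm_comp hM L).submartingale.exists_ae_tendsto_of_bdd
      (R := (μ Set.univ * ENNReal.ofReal (‖L‖ * C)).toNNReal) fun n ↦ ?_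
    rw [ENNReal.coe_toNNReal (by finiteness)]
    simpa using eLpNorm_le_of_ae_bound (p := 1) (μ := μ)
      (ae_of_all μ fun ω ↦ (L.le_opNorm (M n ω)).trans
        (mul_le_mul_of_nonneg_left (hC n ω) (norm_nonneg L)))
  filter_upwards [clm_tendsto Complex.reCLM, clm_tendsto Complex.imCLM] with ω ⟨a, ha⟩ ⟨b, hb⟩
  exact ⟨⟨a, b⟩, tendsto_of_tendsto_re_im ha hb⟩

theorem exists_bddMeasurable_limit_of_martingale [IsFiniteMeasure μ] {M : ℕ → Ω → ℂ}
    (hM : Martingale M ℱ μ) {C : ℝ} (hC : ∀ n ω, ‖M n ω‖ ≤ C) :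
    ∃ f, BddMeasurable f ∧ (∀ᵐ ω ∂μ, Tendsto (M · ω) atTop (𝓝 (f ω))) ∧
      ∀ k, μ[f | ℱ k] =ᵐ[μ] M k := by
  have hint := hM.integrable
  obtain ⟨f₀, hf₀, hlim₀⟩ := measurable_limit_of_tendsto_metrizable_ae
    (fun n ↦ (hint n).aemeasurable) (ae_exists_tendsto_of_norm_le hM hC)
  obtain ⟨f, hf, hff₀⟩ := exists_bddMeasurable_ae_eq hf₀.aemeasurable (C := C) <| by
    filter_upwards [hlim₀] with ω hω
    exact le_of_tendsto hω.norm (Eventually.of_forall fun n ↦ hC n ω)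
  have hlim : ∀ᵐ ω ∂μ, Tendsto (M · ω) atTop (𝓝 (f ω)) := by
    filter_upwards [hlim₀, hff₀] with ω h₁ h₂ using h₂ ▸ h₁
  refine ⟨f, hf, hlim, fun k ↦ ?_⟩
  have condExp_shift (n : ℕ) : μ[M (n + k) | ℱ k] =ᵐ[μ] μ[M k | ℱ k] :=
    (hM.2 k _ (Nat.le_add_left k n)).trans (hM.2 k k le_rfl).symm
  refine (tendsto_condExp_unique (fun n ↦ M (n + k)) (fun _ ↦ M k) f (M k)
    (fun n ↦ hint _) (fun _ ↦ hint k) ?_ (ae_of_all _ fun _ ↦ tendsto_const_nhds)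
    (fun _ ↦ C) (integrable_const C) (fun _ ↦ C) (integrable_const C)
    (fun n ↦ ae_of_all _ (hC _)) (fun _ ↦ ae_of_all _ (hC k)) condExp_shift).trans
    (hM.2 k k le_rfl)
  filter_upwards [hlim] with ω hω using (tendsto_add_atTop_iff_nat k).2 hω

end MartingaleConvergence

section Circle

theorem continuous_ee : Continuous ee := by unfold ee; fun_prop

theorem measurable_ee : Measurable ee := continuous_ee.measurable

theorem ee_natCast_mul (n : ℕ) (x : ℝ) : ee (n * x) = ee x ^ n := by
  rw [ee, ee, ← Circle.exp_natCast_mul]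
  congr 1
  ring

theorem periodic_ee : Function.Periodic ee 1 := fun x ↦ by
  rw [ee, ee, ← Circle.exp_sub_two_pi (-(2 * Real.pi * x))]
  congr 1
  ring

theorem injOn_ee : Set.InjOn ee (Set.Ico 0 1) := by
  refine Circle.exp_injOn_Ioc (a := -(2 * Real.pi)) (b := 0) (by simp) |>.comp (fun x _ y _ h ↦ ?_)
    fun x ⟨h₀, h₁⟩ ↦ ?_
  · simpa [Real.pi_ne_zero] using h
  · have := Real.pi_pos
    constructor <;> nlinarith

instance : IsProbabilityMeasure circleMeasure :=
  haveI : IsProbabilityMeasure (volume.restrict (Set.Ico (0 : ℝ) 1)) := ⟨by simp⟩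
  Measure.isProbabilityMeasure_map measurable_ee.aemeasurable

theorem integral_circleMeasure {G : Circle → ℂ} (hG : AEStronglyMeasurable G circleMeasure) :
    ∫ w, G w ∂circleMeasure = ∫ x in Set.Ico (0 : ℝ) 1, G (ee x) :=
  integral_map measurable_ee.aemeasurable hG

theorem ae_eq_of_forall_integral_ee_mul {F G : ℝ → ℂ}
    (hF : IntegrableOn F (Set.Ico 0 1)) (hG : IntegrableOn G (Set.Ico 0 1))
    (hFG : ∀ g : Circle → ℂ, BddMeasurable g →
      ∫ x in Set.Ico 0 1, g (ee x) * F x = ∫ x in Set.Ico 0 1, g (ee x) * G x) :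
    F =ᵐ[volume.restrict (Set.Ico 0 1)] G := by
  refine Integrable.ae_eq_of_forall_setIntegral_eq F G hF hG fun s hs _ ↦ ?_
  let B : Set Circle := ee '' (s ∩ Set.Ico 0 1)
  have hB : MeasurableSet B := (hs.inter measurableSet_Ico).image_of_continuousOn_injOn
    continuous_ee.continuousOn (injOn_ee.mono Set.inter_subset_right)
  have mul_eq (H : ℝ → ℂ) :
      ∫ x in Set.Ico 0 1, B.indicator (fun _ ↦ 1) (ee x) * H x =
        ∫ x in s, H x ∂(volume.restrict (Set.Ico 0 1)) := by
    rw [← integral_indicator hs]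
    refine setIntegral_congr_fun measurableSet_Ico fun x hx ↦ ?_
    have mem_iff : ee x ∈ B ↔ x ∈ s := by
      rw [injOn_ee.mem_image_iff Set.inter_subset_right hx, Set.mem_inter_iff, and_iff_left hx]
    by_cases hxs : x ∈ s <;> simp [hxs, mem_iff]
  rw [← mul_eq F, ← mul_eq G]
  exact hFG _ ((bddMeasurable_const 1).indicator hB)

/-- The average `(1/N) ∑_{wᴺ = z} G(w)` over the `N`-th roots of `z = ee x`, parametrized by
`x` through the inverse branches `x ↦ (x + k) / N` of multiplication by `N`. -/
noncomputable def branchMean (N : ℕ) (G : Circle → ℂ) (x : ℝ) : ℂ :=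
  (1 / N : ℂ) * ∑ k ∈ Finset.range N, G (ee ((x + k) / N))

variable {N : ℕ}

theorem ee_branch_pow (hN : N ≠ 0) (x : ℝ) (k : ℕ) : ee ((x + k) / N) ^ N = ee x := by
  rw [← ee_natCast_mul, mul_div_cancel₀ _ (by exact_mod_cast hN)]
  simpa using periodic_ee.nat_mul k x

theorem branchMean_pow_mul (hN : N ≠ 0) (g G : Circle → ℂ) (x : ℝ) :
    branchMean N (fun w ↦ g (w ^ N) * G w) x = g (ee x) * branchMean N G x := by
  simp only [branchMean, ee_branch_pow hN, ← Finset.mul_sum, mul_left_comm]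

theorem intervalIntegrable_ee {G : Circle → ℂ} (hG : Integrable G circleMeasure) (a b : ℝ) :
    IntervalIntegrable (fun x ↦ G (ee x)) volume a b := by
  refine (periodic_ee.comp G).intervalIntegrable₀ one_ne_zero ?_ a b
  rw [intervalIntegrable_iff_integrableOn_Ico_of_le zero_le_one]
  exact hG.comp_measurable measurable_ee

theorem intervalIntegrable_ee_branch (hN : N ≠ 0) {G : Circle → ℂ} (hG : Integrable G circleMeasure)
    (k : ℕ) : IntervalIntegrable (fun x : ℝ ↦ G (ee ((x + k) / N))) volume 0 1 := by
  have hN' : (N : ℝ) ≠ 0 := by exact_mod_cast hN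
  have h := ((intervalIntegrable_ee hG (k / N) ((k + 1) / N)).comp_mul_left
    (c := (N : ℝ)⁻¹)).comp_add_right (k : ℝ)
  convert h using 1
  · funext x
    rw [div_eq_inv_mul]
  all_goals field_simp
  all_goals simp

theorem integrableOn_branchMean (hN : N ≠ 0) {G : Circle → ℂ} (hG : Integrable G circleMeasure) :
    IntegrableOn (branchMean N G) (Set.Ico 0 1) :=
  (integrable_finsetSum _ fun k _ ↦ (intervalIntegrable_iff_integrableOn_Ico_of_le zero_le_one).1
    (intervalIntegrable_ee_branch hN hG k)).const_mul _

theorem integral_branchMean (hN : N ≠ 0) {G : Circle → ℂ} (hG : Integrable G circleMeasure) :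
    ∫ x in Set.Ico (0 : ℝ) 1, branchMean N G x = ∫ w, G w ∂circleMeasure := by
  have hN' : (N : ℝ) ≠ 0 := by exact_mod_cast hN
  have integral_branch (k : ℕ) : ∫ x in (0 : ℝ)..1, G (ee ((x + k) / N)) =
      (N : ℝ) • ∫ x in (k / N : ℝ)..((k + 1 : ℕ) / N : ℝ), G (ee x) := by
    simp only [add_div, intervalIntegral.integral_comp_div_add (fun x ↦ G (ee x)) hN']
    congr 2 <;> push_cast <;> ring
  rw [integral_circleMeasure hG.aestronglyMeasurable, integral_Ico_eq_integral_Ioc,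
    integral_Ico_eq_integral_Ioc, ← intervalIntegral.integral_of_le zero_le_one,
    ← intervalIntegral.integral_of_le zero_le_one]
  calc ∫ x in (0 : ℝ)..1, branchMean N G x
      = (1 / N : ℂ) * ∑ k ∈ Finset.range N, ∫ x in (0 : ℝ)..1, G (ee ((x + k) / N)) := by
        simp only [branchMean]
        rw [intervalIntegral.integral_const_mul, intervalIntegral.integral_finsetSum
          fun k _ ↦ intervalIntegrable_ee_branch hN hG k]
    _ = ∑ k ∈ Finset.range N, ∫ x in (k / N : ℝ)..((k + 1 : ℕ) / N : ℝ), G (ee x) := by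
        simp only [integral_branch, ← Finset.smul_sum]
        simp [hN]
    _ = ∫ x in (0 : ℝ)..1, G (ee x) := by
        rw [intervalIntegral.sum_integral_adjacent_intervals (a := fun k : ℕ ↦ (k / N : ℝ))
          fun k _ ↦ intervalIntegrable_ee hG _ _]
        simp [hN']

theorem ruelleFixed_iff_branchMean {m₀ h : Circle → ℂ} :
    RuelleFixed N m₀ h ↔ branchMean N (fun w ↦ ((‖m₀ w‖ ^ 2 : ℝ) : ℂ) * h w)
      =ᵐ[volume.restrict (Set.Ico 0 1)] fun x ↦ h (ee x) :=
  Iff.rfl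

theorem ruelleFixed_iff_integral (hN : N ≠ 0) {m₀ h : Circle → ℂ} (hm₀ : BddMeasurable m₀)
    (hh : Integrable h circleMeasure) :
    RuelleFixed N m₀ h ↔ ∀ g : Circle → ℂ, BddMeasurable g →
      ∫ w, g (w ^ N) * (((‖m₀ w‖ ^ 2 : ℝ) : ℂ) * h w) ∂circleMeasure =
        ∫ w, g w * h w ∂circleMeasure := by
  have hG : Integrable (fun w ↦ ((‖m₀ w‖ ^ 2 : ℝ) : ℂ) * h w) circleMeasure :=
    hm₀.normSq.integrable_mul hh
  have lhs {g : Circle → ℂ} (hg : BddMeasurable g) :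
      ∫ w, g (w ^ N) * (((‖m₀ w‖ ^ 2 : ℝ) : ℂ) * h w) ∂circleMeasure =
        ∫ x in Set.Ico (0 : ℝ) 1,
          g (ee x) * branchMean N (fun w ↦ ((‖m₀ w‖ ^ 2 : ℝ) : ℂ) * h w) x := by
    rw [← integral_branchMean hN
      ((hg.comp (continuous_pow N).measurable).integrable_mul hG)]
    simp only [branchMean_pow_mul hN]
  have rhs {g : Circle → ℂ} (hg : BddMeasurable g) :
      ∫ w, g w * h w ∂circleMeasure = ∫ x in Set.Ico (0 : ℝ) 1, g (ee x) * h (ee x) :=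
    integral_circleMeasure (hg.integrable_mul hh).aestronglyMeasurable
  rw [ruelleFixed_iff_branchMean]
  constructor
  · intro hR g hg
    rw [lhs hg, rhs hg]
    refine integral_congr_ae ?_
    filter_upwards [hR] with x hx using congrArg (g (ee x) * ·) hx
  · intro hint
    have hh_ee : IntegrableOn (fun x ↦ h (ee x)) (Set.Ico 0 1) := hh.comp_measurable measurable_ee
    refine ae_eq_of_forall_integral_ee_mul (integrableOn_branchMean hN hG) hh_ee fun g hg ↦ ?_
    exact (lhs hg).symm.trans ((hint g hg).trans (rhs hg))

end Circle

namespace Solenoid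

variable {N : ℕ}

instance : CompactSpace (Solenoid N) := by
  have carrier_eq : (solenoidGroup N : Set (ℤ → Circle)) = ⋂ n : ℤ, {z | z (n + 1) ^ N = z n} := by
    ext z
    simp [solenoidGroup]
  have closed : IsClosed (solenoidGroup N : Set (ℤ → Circle)) :=
    carrier_eq ▸ isClosed_iInter fun n ↦ isClosed_eq (by fun_prop) (by fun_prop)
  exact isCompact_iff_compactSpace.1 closed.isCompact

instance : TopologicalSpace.PseudoMetrizableSpace (Solenoid N) :=
  Topology.IsInducing.subtypeVal.pseudoMetrizableSpace

theorem continuous_coord (n : ℤ) : Continuous fun z : Solenoid N ↦ z.val n :=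
  (continuous_apply n).comp continuous_subtype_val

theorem measurable_coord (n : ℤ) : Measurable fun z : Solenoid N ↦ z.val n :=
  (measurable_pi_apply n).comp measurable_subtype_coe

theorem shift_shiftInv (z : Solenoid N) : shift N (shiftInv N z) = z :=
  Subtype.ext (funext fun n ↦ congrArg z.val (sub_add_cancel n 1))

theorem shiftInv_shift (z : Solenoid N) : shiftInv N (shift N z) = z :=
  Subtype.ext (funext fun n ↦ congrArg z.val (add_sub_cancel_right n 1))

/-- The inverse shift as a measurable automorphism of the solenoid. -/
def shiftInvEquiv (N : ℕ) : Solenoid N ≃ᵐ Solenoid N where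
  toFun := shiftInv N
  invFun := shift N
  left_inv := shift_shiftInv
  right_inv := shiftInv_shift
  measurable_toFun := (measurable_pi_lambda _ fun n ↦ measurable_coord (n + 1)).subtype_mk
  measurable_invFun := (measurable_pi_lambda _ fun n ↦ measurable_coord (n - 1)).subtype_mk

theorem coord_add_pow (z : Solenoid N) (k : ℤ) (n : ℕ) : z.val (k + n) ^ N ^ n = z.val k := by
  induction n with
  | zero => simp
  | succ n ih => rw [pow_succ', pow_mul, Nat.cast_succ, ← add_assoc, z.property, ih]

theorem coord_toNat_pow (z : Solenoid N) (n : ℤ) :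
    z.val (n.toNat : ℤ) ^ N ^ (-n).toNat = z.val n := by
  have toNat_eq : (n.toNat : ℤ) = n + (-n).toNat := by lia
  rw [toNat_eq, coord_add_pow]

/-- The filtration of the solenoid whose `n`-th σ-algebra is generated by the coordinate `z_n`;
it is increasing because `z_n` is a power of `z_{n+1}`. -/
noncomputable def coordFiltration (N : ℕ) :
    Filtration ℕ (inferInstance : MeasurableSpace (Solenoid N)) where
  seq n := MeasurableSpace.comap (fun z : Solenoid N ↦ z.val (n : ℤ)) inferInstance
  mono' := monotone_nat_of_le_succ fun n ↦ by
    have pow_eq : (fun z : Solenoid N ↦ z.val (n : ℤ)) =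
        (· ^ N) ∘ fun z : Solenoid N ↦ z.val ((n + 1 : ℕ) : ℤ) :=
      funext fun z ↦ (z.property n).symm
    rw [pow_eq, ← MeasurableSpace.comap_comp]
    exact MeasurableSpace.comap_mono (continuous_pow N).measurable.comap_le
  le' n := (measurable_coord n).comap_le

theorem iSup_coordFiltration :
    ⨆ n, coordFiltration N n = (inferInstance : MeasurableSpace (Solenoid N)) := by
  refine le_antisymm (iSup_le (coordFiltration N).le) ?_
  have coord_nat (n : ℕ) : Measurable[⨆ n, coordFiltration N n] fun z : Solenoid N ↦ z.val n :=
    (comap_measurable _).mono (le_iSup (fun n ↦ coordFiltration N n) n) le_rfl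
  have coord_int (n : ℤ) : Measurable[⨆ n, coordFiltration N n] fun z : Solenoid N ↦ z.val n := by
    simp only [← fun z : Solenoid N ↦ coord_toNat_pow z n]
    exact (continuous_pow _).measurable.comp (coord_nat _)
  exact (@measurable_pi_lambda _ _ _ (⨆ n, coordFiltration N n) _ _ coord_int).comap_le

theorem measurable_weight {m₀ : Circle → ℂ} (hm₀ : Measurable m₀) :
    Measurable fun z : Solenoid N ↦ ENNReal.ofReal (‖m₀ (z.val 0)‖ ^ 2) :=
  ((hm₀.comp (measurable_coord 0)).norm.pow_const 2).ennreal_ofReal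

end Solenoid

namespace IsAssociatedMeasure

open Solenoid

variable {N : ℕ} {W : Circle → ℝ} {m : Measure (Solenoid N)} {m₀ h : Circle → ℂ}
  {f : Solenoid N → ℂ}

theorem quasiMeasurePreserving_shiftInv (hm : IsAssociatedMeasure N W m) :
    Measure.QuasiMeasurePreserving (shiftInv N) m m :=
  ⟨(shiftInvEquiv N).measurable, (show m.map (shiftInv N) = _ from hm.2.2) ▸
    withDensity_absolutelyContinuous _ _⟩

theorem quasiMeasurePreserving_shift (hm : IsAssociatedMeasure N W m) (hW : Measurable W)
    (hpos : ∀ᵐ z ∂m, 0 < N * W (z.val 0)) : Measure.QuasiMeasurePreserving (shift N) m m := by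
  have hW₀ : Measurable fun z : Solenoid N ↦ ENNReal.ofReal (N * W (z.val 0)) :=
    ((hW.comp (measurable_coord 0)).const_mul _).ennreal_ofReal
  have ac : m ≪ m.map (shiftInvEquiv N) :=
    (show m.map (shiftInvEquiv N) = _ from hm.2.2) ▸ withDensity_absolutelyContinuous'
      hW₀.aemeasurable (hpos.mono fun z hz ↦ (ENNReal.ofReal_pos.2 hz).ne')
  refine ⟨(shiftInvEquiv N).symm.measurable, ?_⟩
  have ac_map := ac.map (shiftInvEquiv N).symm.measurable
  rwa [MeasurableEquiv.map_symm_map] at ac_map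

theorem integral_comp_coord_zero (hm : IsAssociatedMeasure N W m)
    (hh : AEStronglyMeasurable h circleMeasure) :
    ∫ z, h (z.val 0) ∂m = ∫ w, h w ∂circleMeasure := by
  rw [← hm.2.1] at hh ⊢
  exact (integral_map (measurable_coord 0).aemeasurable hh).symm

theorem ae_eq_of_comp_coord_zero_ae_eq (hm : IsAssociatedMeasure N W m) {k : Circle → ℂ}
    (hh : AEMeasurable h circleMeasure) (hk : AEMeasurable k circleMeasure)
    (hhk : (fun z ↦ h (z.val 0)) =ᵐ[m] fun z ↦ k (z.val 0)) : h =ᵐ[circleMeasure] k := by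
  rw [← hm.2.1] at hh hk ⊢
  exact (ae_eq_map_iff_comp_ae_eq (measurable_coord 0) hh hk).2 hhk

theorem condExp_coord_zero_ae_eq (hm : IsAssociatedMeasure N W m) (hf : Integrable f m)
    (hh : Integrable h circleMeasure)
    (hfh : ∀ g, BddMeasurable g → ∫ z, g (z.val 0) * f z ∂m = ∫ w, g w * h w ∂circleMeasure) :
    m[f | coordFiltration N 0] =ᵐ[m] fun z ↦ h (z.val 0) := by
  have := hm.1
  refine (condExp_comap_ae_eq_comp_iff (measurable_coord (0 : ℕ)) hf (hm.2.1.symm ▸ hh)).2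
    fun g hg ↦ ?_
  exact (hfh g hg).trans (hm.integral_comp_coord_zero (hg.integrable_mul hh).1).symm

theorem ae_coord (hm : IsAssociatedMeasure N W m) {p : Circle → Prop}
    (hp : ∀ᵐ w ∂circleMeasure, p w) (n : ℕ) : ∀ᵐ z ∂m, p (z.val n) := by
  induction n with
  | zero => exact ae_of_ae_map (measurable_coord 0).aemeasurable (hm.2.1.symm ▸ hp)
  | succ n ih => exact hm.quasiMeasurePreserving_shiftInv.ae ih

theorem comp_shiftInv_ae_eq (hm : IsAssociatedMeasure N W m)
    (hf : (fun z ↦ f (shift N z)) =ᵐ[m] f) : (fun z ↦ f (shiftInv N z)) =ᵐ[m] f := by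
  filter_upwards [hm.quasiMeasurePreserving_shiftInv.ae hf] with z hz
  rw [← hz, shift_shiftInv]

section Filter

variable (hN : N ≠ 0) (hm₀ : BddMeasurable m₀)
  (hm : IsAssociatedMeasure N (fun z ↦ ‖m₀ z‖ ^ 2 / N) m)
include hN hm

theorem measShift_eq :
    measShift N m = m.withDensity fun z ↦ ENNReal.ofReal (‖m₀ (z.val 0)‖ ^ 2) := by
  rw [hm.2.2]
  congr! 3
  field_simp

theorem quasiMeasurePreserving_shift_of_ae_ne_zero (hmeas : Measurable m₀)
    (hns : ∀ᵐ w ∂circleMeasure, m₀ w ≠ 0) :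
    Measure.QuasiMeasurePreserving (shift N) m m := by
  refine hm.quasiMeasurePreserving_shift (by fun_prop) ?_
  filter_upwards [hm.ae_coord hns 0] with z hz
  have : m₀ (z.val 0) ≠ 0 := hz
  positivity

theorem integral_comp_shiftInv (hmeas : Measurable m₀) (F : Solenoid N → ℂ) :
    ∫ z, F (shiftInv N z) ∂m = ∫ z, ((‖m₀ (z.val 0)‖ ^ 2 : ℝ) : ℂ) * F z ∂m := by
  refine ((shiftInvEquiv N).measurableEmbedding.integral_map (μ := m) F).symm.trans ?_
  change ∫ z, F z ∂(measShift N m) = _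
  rw [hm.measShift_eq hN,
    integral_withDensity_eq_integral_toReal_smul (measurable_weight hmeas) (by simp)]
  simp

include hm₀

theorem integrable_comp_shiftInv {F : Solenoid N → ℂ} (hF : Integrable F m) :
    Integrable (fun z ↦ F (shiftInv N z)) m := by
  refine ((shiftInvEquiv N).measurableEmbedding.integrable_map_iff (μ := m)).1 ?_
  change Integrable F (measShift N m)
  rw [hm.measShift_eq hN,
    integrable_withDensity_iff_integrable_smul' (measurable_weight hm₀.1) (by simp)]
  simpa [ENNReal.toReal_ofReal] using
    (hm₀.normSq.comp (measurable_coord (N := N) 0)).integrable_mul hF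

theorem integrable_map_coord (hh : Integrable h circleMeasure) (n : ℕ) :
    Integrable h (m.map fun z ↦ z.val n) := by
  have hcoord : Integrable (fun z : Solenoid N ↦ h (z.val n)) m := by
    induction n with
    | zero => exact (hm.2.1.symm ▸ hh).comp_measurable (measurable_coord 0)
    | succ n ih => exact hm.integrable_comp_shiftInv hN hm₀ ih
  have ac : m.map (fun z : Solenoid N ↦ z.val n) ≪ circleMeasure := by
    refine Measure.AbsolutelyContinuous.mk fun s hs hs₀ ↦ ?_
    rw [Measure.map_apply (measurable_coord n) hs]
    exact measure_eq_zero_iff_ae_notMem.2 (hm.ae_coord (measure_eq_zero_iff_ae_notMem.1 hs₀) n)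
  exact (integrable_map_measure (hh.aestronglyMeasurable.mono_ac ac)
    (measurable_coord n).aemeasurable).2 hcoord

theorem condExp_coord_succ (hf : Integrable f m) (hh : Integrable h circleMeasure) {n : ℕ}
    (hfh : m[f | coordFiltration N n] =ᵐ[m] fun z ↦ h (z.val n)) :
    m[fun z ↦ f (shiftInv N z) | coordFiltration N (n + 1)] =ᵐ[m]
      fun z ↦ h (z.val (n + 1 : ℕ)) := by
  have := hm.1
  refine (condExp_comap_ae_eq_comp_iff (measurable_coord (n + 1 : ℕ))
    (hm.integrable_comp_shiftInv hN hm₀ hf)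
    (hm.integrable_map_coord hN hm₀ hh (n + 1))).2 fun g hg ↦ ?_
  have hfh' := (condExp_comap_ae_eq_comp_iff (measurable_coord n) hf
    (hm.integrable_map_coord hN hm₀ hh n)).1 hfh
  -- The density of `m ∘ S` is a function of `z_n`, so it can be absorbed into the test function.
  have weight_eq (z : Solenoid N) : m₀ (z.val 0) = m₀ (z.val n ^ N ^ n) := by
    rw [← coord_add_pow z 0 n, zero_add]
  have weight_bdd : BddMeasurable fun w ↦ ((‖m₀ (w ^ N ^ n)‖ ^ 2 : ℝ) : ℂ) :=
    (hm₀.comp (continuous_pow (N ^ n)).measurable).normSq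
  calc ∫ z, g (z.val (n + 1 : ℕ)) * f (shiftInv N z) ∂m
      = ∫ z, ((‖m₀ (z.val 0)‖ ^ 2 : ℝ) : ℂ) * (g (z.val n) * f z) ∂m :=
        hm.integral_comp_shiftInv hN hm₀.1 fun z ↦ g (z.val n) * f z
    _ = ∫ z, ((‖m₀ (z.val 0)‖ ^ 2 : ℝ) : ℂ) * (g (z.val n) * h (z.val n)) ∂m := by
        simpa only [weight_eq, mul_assoc] using hfh' _ (weight_bdd.mul hg)
    _ = ∫ z, g (z.val (n + 1 : ℕ)) * h (z.val (n + 1 : ℕ)) ∂m :=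
        (hm.integral_comp_shiftInv hN hm₀.1 fun z ↦ g (z.val n) * h (z.val n)).symm

theorem ruelleFixed_iff_condExp (hh : Integrable h circleMeasure) :
    RuelleFixed N m₀ h ↔
      m[fun z ↦ h (z.val 1) | coordFiltration N 0] =ᵐ[m] fun z ↦ h (z.val 0) := by
  have := hm.1
  have hcoord := integrable_map_coord hN hm₀ hm hh
  rw [ruelleFixed_iff_integral hN hm₀ hh]
  refine Iff.trans (forall₂_congr fun g hg ↦ ?_) (condExp_comap_ae_eq_comp_iff
    (measurable_coord (0 : ℕ)) ((hcoord 1).comp_measurable (measurable_coord (1 : ℕ)))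
    (hcoord 0)).symm
  have right_eq : ∫ z, g (z.val 0) * h (z.val 0) ∂m = ∫ w, g w * h w ∂circleMeasure :=
    hm.integral_comp_coord_zero (hg.integrable_mul hh).1
  have left_eq : ∫ z, g (z.val 0) * h (z.val 1) ∂m =
      ∫ w, g (w ^ N) * (((‖m₀ w‖ ^ 2 : ℝ) : ℂ) * h w) ∂circleMeasure := by
    have coord_one_pow (z : Solenoid N) : z.val 1 ^ N = z.val 0 := z.property 0
    calc ∫ z, g (z.val 0) * h (z.val 1) ∂m
        = ∫ z, g (z.val 1 ^ N) * h (z.val 1) ∂m := by simp only [coord_one_pow]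
      _ = ∫ z, ((‖m₀ (z.val 0)‖ ^ 2 : ℝ) : ℂ) * (g (z.val 0 ^ N) * h (z.val 0)) ∂m :=
          hm.integral_comp_shiftInv hN hm₀.1 fun z ↦ g (z.val 0 ^ N) * h (z.val 0)
      _ = ∫ z, g (z.val 0 ^ N) * (((‖m₀ (z.val 0)‖ ^ 2 : ℝ) : ℂ) * h (z.val 0)) ∂m := by
          simp only [mul_left_comm]
      _ = ∫ w, g (w ^ N) * (((‖m₀ w‖ ^ 2 : ℝ) : ℂ) * h w) ∂circleMeasure :=
          hm.integral_comp_coord_zero ((hg.comp (continuous_pow N).measurable).integrable_mul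
            (hm₀.normSq.integrable_mul hh)).1
  rw [← left_eq, ← right_eq]
  rfl

theorem condExp_coord_of_cocycle (hf : Integrable f m) (hcoc : (fun z ↦ f (shift N z)) =ᵐ[m] f)
    (hh : Integrable h circleMeasure)
    (hfh : m[f | coordFiltration N 0] =ᵐ[m] fun z ↦ h (z.val 0)) (n : ℕ) :
    m[f | coordFiltration N n] =ᵐ[m] fun z ↦ h (z.val n) := by
  induction n with
  | zero => exact hfh
  | succ n ih =>
    exact (condExp_congr_ae (hm.comp_shiftInv_ae_eq hcoc).symm).trans
      (hm.condExp_coord_succ hN hm₀ hf hh ih)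

theorem ruelleFixed_of_cocycle (hf : Integrable f m) (hcoc : (fun z ↦ f (shift N z)) =ᵐ[m] f)
    (hh : Integrable h circleMeasure)
    (hfh : m[f | coordFiltration N 0] =ᵐ[m] fun z ↦ h (z.val 0)) : RuelleFixed N m₀ h :=
  have := hm.1
  (ruelleFixed_iff_condExp hN hm₀ hm hh).2 <|
    calc m[fun z ↦ h (z.val 1) | coordFiltration N 0]
        =ᵐ[m] m[m[f | coordFiltration N 1] | coordFiltration N 0] :=
          condExp_congr_ae (hm.condExp_coord_of_cocycle hN hm₀ hf hcoc hh hfh 1).symm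
      _ =ᵐ[m] m[f | coordFiltration N 0] :=
          condExp_condExp_of_le ((coordFiltration N).mono zero_le_one) ((coordFiltration N).le 1)
      _ =ᵐ[m] fun z ↦ h (z.val 0) := hfh

theorem tendsto_ae_coord_of_cocycle (hf : BddMeasurable f)
    (hcoc : (fun z ↦ f (shift N z)) =ᵐ[m] f) (hh : Integrable h circleMeasure)
    (hfh : m[f | coordFiltration N 0] =ᵐ[m] fun z ↦ h (z.val 0)) :
    ∀ᵐ z ∂m, Tendsto (fun n : ℕ ↦ h (z.val n)) atTop (𝓝 (f z)) := by
  have := hm.1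
  have hmeas : StronglyMeasurable[⨆ n, coordFiltration N n] f := by
    rw [iSup_coordFiltration]
    exact hf.1.stronglyMeasurable
  filter_upwards [tendsto_ae_condExp_complex hf.integrable hmeas,
    ae_all_iff.2 (hm.condExp_coord_of_cocycle hN hm₀ hf.integrable hcoc hh hfh)]
    with z hz hzh using hz.congr hzh

theorem ae_eq_of_cocycle {f₁ f₂ : Solenoid N → ℂ} (hf₁ : BddMeasurable f₁)
    (hf₂ : BddMeasurable f₂) (hcoc₁ : (fun z ↦ f₁ (shift N z)) =ᵐ[m] f₁)
    (hcoc₂ : (fun z ↦ f₂ (shift N z)) =ᵐ[m] f₂) (hh : Integrable h circleMeasure)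
    (hf₁h : m[f₁ | coordFiltration N 0] =ᵐ[m] fun z ↦ h (z.val 0))
    (hf₂h : m[f₂ | coordFiltration N 0] =ᵐ[m] fun z ↦ h (z.val 0)) : f₁ =ᵐ[m] f₂ := by
  filter_upwards [hm.tendsto_ae_coord_of_cocycle hN hm₀ hf₁ hcoc₁ hh hf₁h,
    hm.tendsto_ae_coord_of_cocycle hN hm₀ hf₂ hcoc₂ hh hf₂h] with z h₁ h₂
  exact tendsto_nhds_unique h₁ h₂

theorem re_nonneg_of_cocycle (hf : BddMeasurable f)
    (hcoc : (fun z ↦ f (shift N z)) =ᵐ[m] f) (hh : Integrable h circleMeasure)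
    (hfh : m[f | coordFiltration N 0] =ᵐ[m] fun z ↦ h (z.val 0))
    (hpos : ∀ᵐ w ∂circleMeasure, 0 ≤ (h w).re) : ∀ᵐ z ∂m, 0 ≤ (f z).re := by
  filter_upwards [hm.tendsto_ae_coord_of_cocycle hN hm₀ hf hcoc hh hfh,
    ae_all_iff.2 (hm.ae_coord hpos)] with z hz hz_nonneg
  exact ge_of_tendsto' ((Complex.continuous_re.tendsto _).comp hz) hz_nonneg

theorem martingale_coord (hh : BddMeasurable h) (hR : RuelleFixed N m₀ h) :
    Martingale (fun (n : ℕ) (z : Solenoid N) ↦ h (z.val n)) (coordFiltration N) m := by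
  have := hm.1
  have int (n : ℕ) : Integrable (fun z : Solenoid N ↦ h (z.val n)) m :=
    (hh.comp (measurable_coord n)).integrable
  refine martingale_nat (fun n ↦ ?_) int fun n ↦ ?_
  · exact (hh.1.comp (comap_measurable _)).stronglyMeasurable
  · induction n with
    | zero => exact ((ruelleFixed_iff_condExp hN hm₀ hm hh.integrable).1 hR).symm
    | succ n ih => exact (hm.condExp_coord_succ hN hm₀ (int (n + 1)) hh.integrable ih.symm).symm

theorem exists_cocycle_of_ruelleFixed (hns : ∀ᵐ w ∂circleMeasure, m₀ w ≠ 0)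
    (hh : BddMeasurable h) (hR : RuelleFixed N m₀ h) :
    ∃ f : Solenoid N → ℂ, BddMeasurable f ∧ (fun z ↦ f (shift N z)) =ᵐ[m] f ∧
      m[f | coordFiltration N 0] =ᵐ[m] fun z ↦ h (z.val 0) := by
  have := hm.1
  obtain ⟨C, hC⟩ := hh.2
  obtain ⟨f, hf, hlim, hcond⟩ := exists_bddMeasurable_limit_of_martingale
    (hm.martingale_coord hN hm₀ hh hR) fun n z ↦ hC (z.val n)
  refine ⟨f, hf, ?_, hcond 0⟩
  filter_upwards [hlim, (hm.quasiMeasurePreserving_shift_of_ae_ne_zero hN hm₀.1 hns).ae hlim]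
    with z hz hz_shift
  refine tendsto_nhds_unique ((tendsto_add_atTop_iff_nat 1).2 hz_shift) (hz.congr fun n ↦ ?_)
  simp [shift]

end Filter

end IsAssociatedMeasure

/-- `A` is the operator of multiplication by `f` on `L²(μ)`. -/
def IsMulOperator {Ω : Type*} [MeasurableSpace Ω] {μ : Measure Ω}
    (A : Lp ℂ 2 μ →L[ℂ] Lp ℂ 2 μ) (f : Ω → ℂ) : Prop :=
  ∀ ξ : Lp ℂ 2 μ, A ξ =ᵐ[μ] fun x ↦ f x * ξ x

namespace IsMulOperator

variable {Ω : Type*} [MeasurableSpace Ω] {μ : Measure Ω} {A B : Lp ℂ 2 μ →L[ℂ] Lp ℂ 2 μ}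
  {f g : Ω → ℂ}

theorem congr (hA : IsMulOperator A f) (hfg : f =ᵐ[μ] g) : IsMulOperator A g := fun ξ ↦ by
  filter_upwards [hA ξ, hfg] with x hx hx_eq
  rw [hx, hx_eq]

theorem eq (hA : IsMulOperator A f) (hB : IsMulOperator B f) : A = B :=
  ContinuousLinearMap.ext fun ξ ↦ Lp.ext ((hA ξ).trans (hB ξ).symm)

theorem mul (hA : IsMulOperator A f) (hB : IsMulOperator B g) :
    IsMulOperator (A * B) fun x ↦ f x * g x := fun ξ ↦ by
  filter_upwards [hA (B ξ), hB ξ] with x hx hx'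
  rw [mul_apply_eq_comp, hx, hx', mul_assoc]

theorem commute (hA : IsMulOperator A f) (hB : IsMulOperator B g) : Commute A B :=
  (hA.mul hB).eq <| by simpa only [mul_comm] using hB.mul hA

theorem ae_norm_le [SigmaFinite μ] (hA : IsMulOperator A f) (hf : AEMeasurable f μ) :
    ∀ᵐ x ∂μ, ‖f x‖ ≤ ‖A‖ := by
  have enorm_le : ∀ᵐ x ∂μ, ‖f x‖ₑ ^ (2 : ℝ) ≤ ‖A‖ₑ ^ (2 : ℝ) := by
    refine ae_le_of_forall_setLIntegral_le_of_sigmaFinite₀ (by fun_prop) fun s hs hμs ↦ ?_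
    let χ := indicatorConstLp 2 hs hμs.ne (1 : ℂ)
    have hAχ : A χ =ᵐ[μ] s.indicator f := by
      filter_upwards [hA χ, indicatorConstLp_coeFn (p := 2) (hs := hs) (hμs := hμs.ne)
        (c := (1 : ℂ))] with x hx hχ
      by_cases hxs : x ∈ s <;> simp_all [χ]
    have hχ : ‖χ‖ₑ ≤ μ s ^ (1 / 2 : ℝ) := by
      simpa using enorm_indicatorConstLp_le (p := 2) (hs := hs) (hμs := hμs.ne) (c := (1 : ℂ))
    calc ∫⁻ x in s, ‖f x‖ₑ ^ (2 : ℝ) ∂μ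
        = eLpNorm (s.indicator f) 2 μ ^ (2 : ℝ) := by
          rw [eLpNorm_indicator_eq_eLpNorm_restrict hs,
            eLpNorm_eq_lintegral_rpow_enorm_toReal two_ne_zero ENNReal.ofNat_ne_top,
            ← ENNReal.rpow_mul]
          simp
      _ = ‖A χ‖ₑ ^ (2 : ℝ) := by rw [Lp.enorm_def, eLpNorm_congr_ae hAχ]
      _ ≤ (‖A‖ₑ * μ s ^ (1 / 2 : ℝ)) ^ (2 : ℝ) := by
          gcongr
          exact A.le_opENorm_of_le hχ
      _ = ∫⁻ _ in s, ‖A‖ₑ ^ (2 : ℝ) ∂μ := by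
          rw [setLIntegral_const, ENNReal.mul_rpow_of_nonneg _ _ zero_le_two, ← ENNReal.rpow_mul]
          simp
  filter_upwards [enorm_le] with x hx
  rwa [ENNReal.rpow_le_rpow_iff two_pos, enorm_le_iff_norm_le] at hx

end IsMulOperator

section MulOperator

variable {X : Type*} [TopologicalSpace X] [CompactSpace X] [MeasurableSpace X] [BorelSpace X]
  (μ : Measure X) [IsFiniteMeasure μ]

/-- Multiplication of elements of `L²(μ)` by continuous functions, as a bounded bilinear map. -/
noncomputable def mulOperatorL : C(X, ℂ) →L[ℂ] Lp ℂ 2 μ →L[ℂ] Lp ℂ 2 μ :=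
  (ContinuousLinearMap.mul ℂ ℂ).holderL μ ∞ 2 2 ∘L ContinuousMap.toLp ∞ μ ℂ

theorem isMulOperator_mulOperatorL (g : C(X, ℂ)) : IsMulOperator (mulOperatorL μ g) g := fun ξ ↦ by
  filter_upwards [(ContinuousLinearMap.mul ℂ ℂ).coeFn_holder (r := 2)
    (ContinuousMap.toLp ∞ μ ℂ g) ξ, ContinuousMap.coeFn_toLp (p := ∞) (𝕜 := ℂ) μ g] with x hx hgx
  exact hx.trans (by rw [hgx]; rfl)

/-- The representation of the algebra `C(X, ℂ)` on `L²(μ)` by multiplication operators. -/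
noncomputable def mulOperator : C(X, ℂ) →ₐ[ℂ] Lp ℂ 2 μ →L[ℂ] Lp ℂ 2 μ :=
  AlgHom.ofLinearMap (mulOperatorL μ) ((isMulOperator_mulOperatorL μ 1).eq fun ξ ↦ by simp)
    fun g₁ g₂ ↦ (isMulOperator_mulOperatorL μ (g₁ * g₂)).eq
      ((isMulOperator_mulOperatorL μ g₁).mul (isMulOperator_mulOperatorL μ g₂))

theorem isMulOperator_mulOperator (g : C(X, ℂ)) : IsMulOperator (mulOperator μ g) g :=
  isMulOperator_mulOperatorL μ g

theorem continuous_mulOperator : Continuous (mulOperator μ) :=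
  (mulOperatorL μ).continuous

variable {μ}

variable [NormalSpace X] [μ.WeaklyRegular] {A : Lp ℂ 2 μ →L[ℂ] Lp ℂ 2 μ}

theorem isMulOperator_of_commute_mulOperator (hA : ∀ g, Commute A (mulOperator μ g)) :
    IsMulOperator A (A (ContinuousMap.toLp 2 μ ℂ 1)) := by
  let toLp : C(X, ℂ) →L[ℂ] Lp ℂ 2 μ := ContinuousMap.toLp 2 μ ℂ
  let B := (ContinuousLinearMap.mul ℂ ℂ).holderL μ 2 2 1
  have coe_toLp (g : C(X, ℂ)) : toLp g =ᵐ[μ] g := ContinuousMap.coeFn_toLp (𝕜 := ℂ) μ g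
  have coe_B (ξ η : Lp ℂ 2 μ) : B ξ η =ᵐ[μ] fun x ↦ ξ x * η x :=
    (ContinuousLinearMap.mul ℂ ℂ).coeFn_holder ξ η
  have apply_toLp (g : C(X, ℂ)) : A (toLp g) =ᵐ[μ] fun x ↦ g x * A (toLp 1) x := by
    have toLp_eq : toLp g = mulOperator μ g (toLp 1) := by
      refine Lp.ext ?_
      filter_upwards [coe_toLp g, isMulOperator_mulOperator μ g (toLp 1), coe_toLp 1]
        with x hg hmul hone
      rw [hg, hmul, hone, ContinuousMap.one_apply, mul_one]
    rw [toLp_eq, ← mul_apply_eq_comp, (hA g).eq]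
    exact isMulOperator_mulOperator μ g (A (toLp 1))
  have eq_on_dense : (fun ξ ↦ B (A ξ) (toLp 1)) = fun ξ ↦ B (A (toLp 1)) ξ := by
    refine (ContinuousMap.toLp_denseRange (p := 2) ℂ μ ℂ ENNReal.ofNat_ne_top).equalizer
      (by fun_prop) (by fun_prop) (funext fun g ↦ Lp.ext ?_)
    filter_upwards [coe_B (A (toLp g)) (toLp 1), coe_B (A (toLp 1)) (toLp g), apply_toLp g,
      coe_toLp 1, coe_toLp g] with x hleft hright happly hone hg
    refine hleft.trans (Eq.trans ?_ hright.symm)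
    rw [happly, hone, hg, ContinuousMap.one_apply, mul_one, mul_comm]
  intro ξ
  filter_upwards [coe_B (A ξ) (toLp 1), coe_B (A (toLp 1)) ξ, coe_toLp 1,
    Filter.EventuallyEq.of_eq (congrArg (↑· : Lp ℂ 1 μ → X → ℂ) (congrFun eq_on_dense ξ))]
    with x hleft hright hone heq
  rw [← hright, ← heq, hleft, hone, ContinuousMap.one_apply, mul_one]

theorem exists_bddMeasurable_isMulOperator (hA : ∀ g, Commute A (mulOperator μ g)) :
    ∃ f : X → ℂ, BddMeasurable f ∧ IsMulOperator A f := by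
  have hmul := isMulOperator_of_commute_mulOperator hA
  have hmeas := (Lp.aestronglyMeasurable (A (ContinuousMap.toLp 2 μ ℂ 1))).aemeasurable
  obtain ⟨f, hf, hfeq⟩ := exists_bddMeasurable_ae_eq hmeas (hmul.ae_norm_le hmeas)
  exact ⟨f, hf, hmul.congr hfeq.symm⟩

end MulOperator

theorem commute_of_separatesPoints {X R : Type*} [TopologicalSpace X] [CompactSpace X] [Ring R]
    [Algebra ℂ R] [TopologicalSpace R] [T2Space R] [ContinuousMul R] {φ : C(X, ℂ) →ₐ[ℂ] R}
    (hφ : Continuous φ) {s : Set C(X, ℂ)} (hs : s ⊆ unitary C(X, ℂ))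
    (hsep : (StarAlgebra.adjoin ℂ s).SeparatesPoints) {a : R} (ha : ∀ g ∈ s, Commute a (φ g))
    (g : C(X, ℂ)) : Commute a (φ g) := by
  let K : Subalgebra ℂ C(X, ℂ) := (Subalgebra.centralizer ℂ {a}).comap φ
  have mem_K (g : C(X, ℂ)) : g ∈ K ↔ Commute a (φ g) := by
    simp [K, Subalgebra.mem_centralizer_iff, Commute, SemiconjBy]
  have star_mem (g : C(X, ℂ)) (hg : star g ∈ s) : g ∈ K := by
    let u : Rˣ := (Unitary.toUnits ⟨star g, hs hg⟩).map (φ : C(X, ℂ) →* R)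
    have : Commute a u := ha _ hg
    simpa [mem_K, u, ← Unitary.star_eq_inv] using this.units_inv_right
  have adjoin_le : (StarAlgebra.adjoin ℂ s).toSubalgebra ≤ K := by
    rw [StarAlgebra.adjoin_toSubalgebra, Algebra.adjoin_le_iff]
    exact Set.union_subset (fun g hg ↦ (mem_K g).2 (ha g hg)) star_mem
  have isClosed_K : IsClosed (K : Set C(X, ℂ)) := (Set.isClosed_centralizer {a}).preimage hφ
  have mem_closure : g ∈ (StarAlgebra.adjoin ℂ s).topologicalClosure :=
    ContinuousMap.starSubalgebra_topologicalClosure_eq_top_of_separatesPoints _ hsep ▸ trivial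
  exact (mem_K g).1 (closure_minimal adjoin_le isClosed_K mem_closure)

namespace Solenoid

variable {N : ℕ}

/-- The coordinate `z ↦ z_n` as an element of `C(S_N, ℂ)`. -/
def coordFun (N : ℕ) (n : ℤ) : C(Solenoid N, ℂ) where
  toFun z := z.val n
  continuous_toFun := continuous_subtype_val.comp (continuous_coord n)

theorem coordFun_mem_unitary (n : ℤ) : coordFun N n ∈ unitary C(Solenoid N, ℂ) := by
  rw [Unitary.mem_iff_star_mul_self]
  ext z
  simp [coordFun, ← Circle.coe_inv_eq_conj]

theorem separatesPoints_adjoin_coordFun :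
    (StarAlgebra.adjoin ℂ (Set.range fun n : ℕ ↦ coordFun N n)).SeparatesPoints := by
  intro x y hxy
  have ⟨n, hn⟩ : ∃ n : ℕ, x.val n ≠ y.val n := by
    by_contra! h
    refine hxy (Subtype.ext (funext fun n ↦ ?_))
    rw [← coord_toNat_pow x, ← coord_toNat_pow y, h]
  exact ⟨_, ⟨coordFun N n, StarAlgebra.subset_adjoin ℂ _ ⟨n, rfl⟩, rfl⟩, fun h ↦ hn (Circle.ext h)⟩

end Solenoid

namespace IsWaveletRepOn

open Solenoid

variable {N : ℕ} {m₀ : Circle → ℂ} {m : Measure (Solenoid N)}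
  {U T : unitary (Lp ℂ 2 m →L[ℂ] Lp ℂ 2 m)} {A : Lp ℂ 2 m →L[ℂ] Lp ℂ 2 m} {f : Solenoid N → ℂ}
  (hUT : IsWaveletRepOn N m₀ m U T)
  (hshift : Measure.QuasiMeasurePreserving (shift N) m m)
include hUT

theorem isMulOperator_right : IsMulOperator (T : Lp ℂ 2 m →L[ℂ] Lp ℂ 2 m) (coordFun N 0) :=
  hUT.2

include hshift

theorem mulOperator_coordFun_mul [IsFiniteMeasure m] (n : ℤ) :
    mulOperator m (coordFun N n) * U = U * mulOperator m (coordFun N (n + 1)) := by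
  refine ContinuousLinearMap.ext fun ξ ↦ Lp.ext ?_
  simp only [mul_apply_eq_comp]
  filter_upwards [isMulOperator_mulOperator m (coordFun N n) (U.1 ξ), hUT.1 ξ,
    hUT.1 (mulOperator m (coordFun N (n + 1)) ξ),
    hshift.ae (isMulOperator_mulOperator m (coordFun N (n + 1)) ξ)] with z hleft hU hright hmul
  have coord_shift : coordFun N (n + 1) (shift N z) = coordFun N n z := by
    simp [coordFun, shift]
  rw [hleft, hU, hright, hmul, coord_shift, mul_left_comm]

theorem commute_mulOperator_coordFun [IsFiniteMeasure m]
    (hAU : Commute A (U : Lp ℂ 2 m →L[ℂ] Lp ℂ 2 m))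
    (hAT : Commute A (T : Lp ℂ 2 m →L[ℂ] Lp ℂ 2 m)) (n : ℕ) :
    Commute A (mulOperator m (coordFun N n)) := by
  induction n with
  | zero => exact (isMulOperator_mulOperator m (coordFun N 0)).eq hUT.isMulOperator_right ▸ hAT
  | succ n ih =>
    have hmul := hUT.mulOperator_coordFun_mul hshift n
    refine (Unitary.toUnits U).isUnit.mul_left_cancel ?_
    calc (U : Lp ℂ 2 m →L[ℂ] Lp ℂ 2 m) * (A * mulOperator m (coordFun N (n + 1)))
        = A * mulOperator m (coordFun N n) * U := by
          rw [← mul_assoc, ← hAU.eq, mul_assoc, ← hmul, mul_assoc]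
      _ = U * (mulOperator m (coordFun N (n + 1)) * A) := by
          rw [ih.eq, mul_assoc, hAU.eq, ← mul_assoc, hmul, mul_assoc]

theorem exists_isMulOperator_of_commute [IsFiniteMeasure m]
    (hAU : Commute A (U : Lp ℂ 2 m →L[ℂ] Lp ℂ 2 m))
    (hAT : Commute A (T : Lp ℂ 2 m →L[ℂ] Lp ℂ 2 m)) :
    ∃ f : Solenoid N → ℂ, BddMeasurable f ∧ IsMulOperator A f :=
  exists_bddMeasurable_isMulOperator <|
    commute_of_separatesPoints (s := Set.range fun n : ℕ ↦ coordFun N n) (continuous_mulOperator m)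
      (Set.range_subset_iff.2 fun n ↦ coordFun_mem_unitary (n : ℤ)) separatesPoints_adjoin_coordFun
      (Set.forall_mem_range.2 (hUT.commute_mulOperator_coordFun hshift hAU hAT))

theorem commute_iff_cocycle [IsFiniteMeasure m] (hns : ∀ᵐ z ∂m, m₀ (z.val 0) ≠ 0)
    (hA : IsMulOperator A f) :
    Commute A (U : Lp ℂ 2 m →L[ℂ] Lp ℂ 2 m) ↔ (fun z ↦ f (shift N z)) =ᵐ[m] f := by
  have mul_apply (ξ : Lp ℂ 2 m) :
      (A * U) ξ =ᵐ[m] fun z ↦ m₀ (z.val 0) * (f z * ξ (shift N z)) := by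
    filter_upwards [hA (U.1 ξ), hUT.1 ξ] with z hAz hUz
    rw [mul_apply_eq_comp, hAz, hUz, mul_left_comm]
  have apply_mul (ξ : Lp ℂ 2 m) :
      (U * A) ξ =ᵐ[m] fun z ↦ m₀ (z.val 0) * (f (shift N z) * ξ (shift N z)) := by
    filter_upwards [hUT.1 (A ξ), hshift.ae (hA ξ)] with z hUz hAz
    rw [mul_apply_eq_comp, hUz, hAz]
  constructor
  · intro hAU
    let one : Lp ℂ 2 m := ContinuousMap.toLp 2 m ℂ 1
    have hone : one =ᵐ[m] 1 := ContinuousMap.coeFn_toLp (𝕜 := ℂ) m 1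
    have hAU_one := mul_apply one
    rw [hAU.eq] at hAU_one
    filter_upwards [hAU_one, apply_mul one, hshift.ae hone, hns] with z hl hr hz hz₀
    rw [hl, hz, Pi.one_apply, mul_one, mul_one] at hr
    exact (mul_left_cancel₀ hz₀ hr).symm
  · intro hf
    refine ContinuousLinearMap.ext fun ξ ↦ Lp.ext ?_
    filter_upwards [mul_apply ξ, apply_mul ξ, hf] with z hl hr hz
    rw [hl, hr, hz]

theorem mem_commutant_iff [IsFiniteMeasure m] (hns : ∀ᵐ z ∂m, m₀ (z.val 0) ≠ 0) :
    (Commute A (U : Lp ℂ 2 m →L[ℂ] Lp ℂ 2 m) ∧ Commute A (T : Lp ℂ 2 m →L[ℂ] Lp ℂ 2 m)) ↔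
      ∃ f : Solenoid N → ℂ, BddMeasurable f ∧ (fun z ↦ f (shift N z)) =ᵐ[m] f ∧
        IsMulOperator A f := by
  constructor
  · rintro ⟨hAU, hAT⟩
    obtain ⟨f, hf, hA⟩ := hUT.exists_isMulOperator_of_commute hshift hAU hAT
    exact ⟨f, hf, (hUT.commute_iff_cocycle hshift hns hA).1 hAU, hA⟩
  · rintro ⟨f, -, hcoc, hA⟩
    exact ⟨(hUT.commute_iff_cocycle hshift hns hA).2 hcoc, hA.commute hUT.isMulOperator_right⟩

end IsWaveletRepOn

end

open MeasureTheory Real Complex Filter Finset in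
/-- Corollary 3.6. Let `m₀ ∈ L^∞(𝕋)` be non-singular with
`R_{m₀}1 = 1` and let `m` be the associated measure on the solenoid, with the
wavelet representation realized on `L²(m)` by `Uξ = m₀·(ξ∘S)`, `T = M_{z₀}`,
and let `E` be the conditional expectation onto `L¹(𝕋)`.  Then there is a
one-to-one, linear and monotone correspondence between
(i) operators in the commutant of `{U,T}`,
(ii) cocycles, i.e. `f ∈ L^∞(m)` with `f∘S = f` a.e., and
(iii) `h ∈ L^∞(𝕋)` harmonic for the Ruelle operator, `R_{m₀} h = h`:
from (i) to (ii), the commutant consists exactly of the multiplication operators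
`M_f` by cocycles `f`; from (ii) to (iii) the correspondence is `f ↦ E(f)`, which
is a linear, positivity-preserving bijection (modulo null sets) onto the fixed
points of `R_{m₀}`. -/
theorem statement_11 (N : ℕ) (hN : 2 ≤ N)
    (m₀ : Circle → ℂ) (hmeas : Measurable m₀) (hbdd : ∃ C : ℝ, ∀ z, ‖m₀ z‖ ≤ C)
    (hns : circleMeasure {z | m₀ z = 0} = 0) (hqmf : QMF N m₀)
    (m : Measure (Solenoid N))
    (hm : IsAssociatedMeasure N (fun z => ‖m₀ z‖ ^ 2 / N) m)
    (U T : unitary (Lp ℂ 2 m →L[ℂ] Lp ℂ 2 m))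
    (hUT : IsWaveletRepOn N m₀ m U T)
    (E : (Solenoid N → ℂ) → (Circle → ℂ))
    (hE1 : ∀ f : Solenoid N → ℂ, Integrable f m →
      Integrable (E f) circleMeasure ∧
        ∫ w, E f w ∂circleMeasure = ∫ z, f z ∂m)
    (hE2 : ∀ g : Circle → ℂ, BddMeasurable g → ∀ f : Solenoid N → ℂ, Integrable f m →
      E (fun z => g (z.val 0) * f z) =ᵐ[circleMeasure] fun w => g w * E f w)
    (hE3 : ∀ f g : Solenoid N → ℂ, Integrable f m → Integrable g m → ∀ c : ℂ,
      E (fun z => c * f z + g z) =ᵐ[circleMeasure] fun w => c * E f w + E g w)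
    (hE4 : ∀ f : Solenoid N → ℂ, Integrable f m →
      (∀ᵐ z ∂m, 0 ≤ (f z).re ∧ (f z).im = 0) →
      ∀ᵐ w ∂circleMeasure, 0 ≤ (E f w).re ∧ (E f w).im = 0) :
    -- (i) ↔ (ii): the commutant of `{U,T}` consists exactly of the multiplication
    -- operators `M_f` with `f` a bounded cocycle
    (∀ A : Lp ℂ 2 m →L[ℂ] Lp ℂ 2 m,
      (Commute A (U : Lp ℂ 2 m →L[ℂ] Lp ℂ 2 m) ∧
       Commute A (T : Lp ℂ 2 m →L[ℂ] Lp ℂ 2 m)) ↔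
      ∃ f : Solenoid N → ℂ, BddMeasurable f ∧
        (fun z => f (shift N z)) =ᵐ[m] f ∧
        ∀ ξ : Lp ℂ 2 m, (A ξ : Solenoid N → ℂ) =ᵐ[m]
          fun z => f z * (ξ : Solenoid N → ℂ) z) ∧
    -- (ii) → (iii): `E` maps cocycles to harmonic functions of the Ruelle operator
    (∀ f : Solenoid N → ℂ, BddMeasurable f → (fun z => f (shift N z)) =ᵐ[m] f →
      RuelleFixed N m₀ (E f)) ∧
    -- the correspondence `f ↦ E f` is one-to-one on cocycles ...
    (∀ f₁ f₂ : Solenoid N → ℂ, BddMeasurable f₁ → BddMeasurable f₂ →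
      (fun z => f₁ (shift N z)) =ᵐ[m] f₁ → (fun z => f₂ (shift N z)) =ᵐ[m] f₂ →
      E f₁ =ᵐ[circleMeasure] E f₂ → f₁ =ᵐ[m] f₂) ∧
    -- ... and onto the harmonic functions `h ∈ L^∞(𝕋)`, `R_{m₀} h = h`
    (∀ h : Circle → ℂ, BddMeasurable h → RuelleFixed N m₀ h →
      ∃ f : Solenoid N → ℂ, BddMeasurable f ∧
        (fun z => f (shift N z)) =ᵐ[m] f ∧ E f =ᵐ[circleMeasure] h) ∧
    -- monotonicity of the correspondence: a real-valued cocycle is positive iff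
    -- its harmonic function is positive
    (∀ f : Solenoid N → ℂ, BddMeasurable f → (fun z => f (shift N z)) =ᵐ[m] f →
      (∀ᵐ z ∂m, (f z).im = 0) →
      ((∀ᵐ z ∂m, 0 ≤ (f z).re) ↔ ∀ᵐ w ∂circleMeasure, 0 ≤ (E f w).re)) := by
  have hN₀ : N ≠ 0 := by lia
  have hm₀ : BddMeasurable m₀ := ⟨hmeas, hbdd⟩
  have hns' : ∀ᵐ w ∂circleMeasure, m₀ w ≠ 0 := measure_eq_zero_iff_ae_notMem.1 hns
  have := hm.1
  have hEint (f) (hf : BddMeasurable f) : Integrable (E f) circleMeasure := (hE1 f hf.integrable).1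
  have hEcond (f) (hf : BddMeasurable f) :=
    hm.condExp_coord_zero_ae_eq hf.integrable (hEint f hf) fun g hg ↦
      (hE1 _ ((hg.comp (Solenoid.measurable_coord 0)).integrable_mul hf.integrable)).2.symm.trans
        (integral_congr_ae (hE2 g hg f hf.integrable))
  refine ⟨fun A ↦ hUT.mem_commutant_iff
      (hm.quasiMeasurePreserving_shift_of_ae_ne_zero hN₀ hmeas hns') (hm.ae_coord hns' 0),
    fun f hf hcoc ↦ hm.ruelleFixed_of_cocycle hN₀ hm₀ hf.integrable hcoc (hEint f hf) (hEcond f hf),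
    fun f₁ f₂ hf₁ hf₂ hcoc₁ hcoc₂ hE ↦ ?_, fun h hh hR ↦ ?_, fun f hf hcoc him ↦ ⟨fun hpos ↦ ?_,
      hm.re_nonneg_of_cocycle hN₀ hm₀ hf hcoc (hEint f hf) (hEcond f hf)⟩⟩
  · exact hm.ae_eq_of_cocycle hN₀ hm₀ hf₁ hf₂ hcoc₁ hcoc₂ (hEint f₁ hf₁) (hEcond f₁ hf₁)
      ((hEcond f₂ hf₂).trans (hm.ae_coord hE.symm 0))
  · obtain ⟨f, hf, hcoc, hfh⟩ := hm.exists_cocycle_of_ruelleFixed hN₀ hm₀ hns' hh hR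
    exact ⟨f, hf, hcoc, hm.ae_eq_of_comp_coord_zero_ae_eq (hEint f hf).1.aemeasurable
      hh.1.aemeasurable ((hEcond f hf).symm.trans hfh)⟩
  · filter_upwards [hE4 f hf.integrable (hpos.and him)] with w hw using hw.1
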